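/- For the uniform probability distribution P on the boundary L of the regular hexagon with vertices (0,0), (1,0), (3/2,√3/2), (1,√3), (0,√3), (−1/2,√3/2), the set {(15/16, √3/16), (11/8, √3/2), (15/16, 15√3/16), (1/16, 15√3/16), (−3/8, √3/2), (1/16, √3/16)} forms an optimal set of six-means, and the quantization error for six-means is V₆(P) = 13/192. -/

import Mathlib

open MeasureTheory Real Filter
open scoped ENNReal

noncomputable section

/-- The plane `ℝ²` with the Euclidean norm. -/
abbrev E2 : Type := EuclideanSpace ℝ (Fin 2)

/-- The point `(a, b)` of `ℝ²`. -/
def pt (a b : ℝ) : E2 := !₂[a, b]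

/-- The `n`th quantization error of a Borel probability measure `P` on `ℝ²`:
the infimum of `∫ min_{a ∈ α} ‖x - a‖² dP(x)` over all (nonempty) finite sets
`α ⊆ ℝ²` with at most `n` elements. -/
def quantErr (P : Measure E2) (n : ℕ) : ℝ :=
  sInf {v : ℝ | ∃ α : Set E2, α.Finite ∧ α.Nonempty ∧ α.ncard ≤ n ∧
    v = ∫ x, sInf ((fun a => ‖x - a‖ ^ 2) '' α) ∂P}

/-- `α` is an optimal set of `n`-means for `P` if it attains the `n`th
quantization error. -/
def IsOptimalSet (P : Measure E2) (n : ℕ) (α : Set E2) : Prop :=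
  α.Finite ∧ α.Nonempty ∧ α.ncard ≤ n ∧
    (∫ x, sInf ((fun a => ‖x - a‖ ^ 2) '' α) ∂P) = quantErr P n

/-- The boundary `L` of the regular hexagon with vertices `O(0,0)`, `A₁(1,0)`,
`A₂(3/2,√3/2)`, `A₃(1,√3)`, `A₄(0,√3)`, `A₅(-1/2,√3/2)`. -/
def hexL : Set E2 :=
  segment ℝ (pt 0 0) (pt 1 0) ∪ segment ℝ (pt 1 0) (pt (3/2) (Real.sqrt 3/2)) ∪
  segment ℝ (pt (3/2) (Real.sqrt 3/2)) (pt 1 (Real.sqrt 3)) ∪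
  segment ℝ (pt 1 (Real.sqrt 3)) (pt 0 (Real.sqrt 3)) ∪
  segment ℝ (pt 0 (Real.sqrt 3)) (pt (-(1/2)) (Real.sqrt 3/2)) ∪
  segment ℝ (pt (-(1/2)) (Real.sqrt 3/2)) (pt 0 0)

/-- The uniform probability distribution on `hexL`: density `1/6` with respect
to the one-dimensional Hausdorff (arc-length) measure on `hexL`. -/
def hexP : Measure E2 := (6 : ℝ≥0∞)⁻¹ • (μH[1] : Measure E2).restrict hexL

/-!
For every threshold `c` one has `min_a ‖x - a‖² ≥ c - ∑_a (c - ‖x - a‖²)⁺`, so it suffices to bound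
the gain `∫ (c - ‖x - a‖²)⁺ dP(x)` of a single point `a`. The threshold is `c = 13/64`, the squared
distance from the midpoint of an edge to the nearest of the claimed means.

As `c < 1/4` and nonadjacent edges are at distance at least `1`, the points of positive gain lie on
two adjacent edges, and by convexity they form a segment on each. By the parallel axis theorem, two
segments of total length `s` on the arms of a `120°` corner have moment of inertia at least
`13 s³ / 192` about any point; the extreme case is two equal segments meeting at the corner. Hence
the gain is at most `(13 s / 64 - 13 s³ / 192) / 6`, which is at most `13/576`, with equality at
`s = 1`, and six points leave an error of at least `13/64 - 6 · 13/576 = 13/192`.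
-/

open Set Metric
open scoped InnerProductSpace

section Quantization

lemma sInf_image_norm_sub_sq {E : Type*} [SeminormedAddCommGroup E] (α : Set E) (x : E) :
    sInf ((fun a => ‖x - a‖ ^ 2) '' α) = infDist x α ^ 2 := by
  rcases α.eq_empty_or_nonempty with rfl | hne
  · simp
  refine IsGLB.csInf_eq ⟨?_, fun b hb => ?_⟩ (hne.image _)
  · rintro _ ⟨a, ha, rfl⟩
    simp only [← dist_eq_norm]
    exact pow_le_pow_left₀ infDist_nonneg (infDist_le_dist_of_mem ha) 2
  · rw [← sqrt_le_left infDist_nonneg, le_infDist hne]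
    intro a ha
    rw [sqrt_le_left dist_nonneg, dist_eq_norm]
    exact hb ⟨a, ha, rfl⟩

variable {X : Type*} [PseudoMetricSpace X]

lemma sub_sum_posPart_le_infDist_sq (c : ℝ) {α : Finset X} (hα : α.Nonempty) (x : X) :
    c - ∑ a ∈ α, (c - dist x a ^ 2)⁺ ≤ infDist x α ^ 2 := by
  obtain ⟨a, ha, hxa⟩ := α.finite_toSet.isCompact.exists_infDist_eq_dist hα x
  have hsum : (c - dist x a ^ 2)⁺ ≤ ∑ b ∈ α, (c - dist x b ^ 2)⁺ :=
    Finset.single_le_sum (f := fun b => (c - dist x b ^ 2)⁺) (fun _ _ => posPart_nonneg _) ha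
  rw [hxa]
  linarith [le_posPart (c - dist x a ^ 2)]

variable [MeasurableSpace X] [OpensMeasurableSpace X]

lemma integrable_posPart_sub_dist_sq (P : Measure X) [IsFiniteMeasure P] (c : ℝ) (a : X) :
    Integrable (fun x => (c - dist x a ^ 2)⁺) P := by
  have hcont : Continuous fun x => (c - dist x a ^ 2)⁺ := continuous_posPart.comp (by fun_prop)
  refine Integrable.of_bound hcont.measurable.aestronglyMeasurable c⁺ (ae_of_all _ fun x => ?_)
  rw [norm_of_nonneg (posPart_nonneg _)]
  exact posPart_mono (by linarith [sq_nonneg (dist x a)])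

theorem sub_mul_le_integral_infDist_sq {P : Measure X} [IsProbabilityMeasure P] {c M : ℝ}
    (hM : ∀ a, ∫ x, (c - dist x a ^ 2)⁺ ∂P ≤ M) {α : Set X} (hfin : α.Finite)
    (hne : α.Nonempty) {n : ℕ} (hn : α.ncard ≤ n)
    (hint : Integrable (fun x => infDist x α ^ 2) P) :
    c - n * M ≤ ∫ x, infDist x α ^ 2 ∂P := by
  lift α to Finset X using hfin
  have hM₀ : 0 ≤ M := (integral_nonneg fun _ => posPart_nonneg _).trans (hM hne.some)
  have hgain (a : X) := integrable_posPart_sub_dist_sq P c a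
  rw [ncard_coe_finset] at hn
  calc c - n * M ≤ c - ∑ a ∈ α, ∫ x, (c - dist x a ^ 2)⁺ ∂P := by
        gcongr
        calc ∑ a ∈ α, ∫ x, (c - dist x a ^ 2)⁺ ∂P ≤ α.card * M := by
              simpa using Finset.sum_le_card_nsmul α _ M fun a _ => hM a
          _ ≤ n * M := by gcongr
    _ = ∫ x, (c - ∑ a ∈ α, (c - dist x a ^ 2)⁺) ∂P := by
        rw [integral_sub (integrable_const c) (integrable_finsetSum _ fun a _ => hgain a),
          integral_finsetSum _ fun a _ => hgain a]
        simp
    _ ≤ ∫ x, infDist x α ^ 2 ∂P := by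
        refine integral_mono ?_ hint fun x => sub_sum_posPart_le_infDist_sq c hne x
        exact (integrable_const c).sub (integrable_finsetSum _ fun a _ => hgain a)

lemma isOptimalSet_and_quantErr_eq {P : Measure E2} {n : ℕ} {α : Set E2} {V : ℝ}
    (hfin : α.Finite) (hne : α.Nonempty) (hn : α.ncard ≤ n)
    (hle : ∫ x, infDist x α ^ 2 ∂P ≤ V)
    (hge : ∀ β : Set E2, β.Finite → β.Nonempty → β.ncard ≤ n → V ≤ ∫ x, infDist x β ^ 2 ∂P) :
    IsOptimalSet P n α ∧ quantErr P n = V := by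
  have hα : ∫ x, infDist x α ^ 2 ∂P = V := hle.antisymm (hge α hfin hne hn)
  have hV : quantErr P n = V := by
    simp only [quantErr, sInf_image_norm_sub_sq]
    refine IsLeast.csInf_eq ⟨⟨α, hfin, hne, hn, hα.symm⟩, ?_⟩
    rintro _ ⟨β, hβfin, hβne, hβn, rfl⟩
    exact hge β hβfin hβne hβn
  refine ⟨⟨hfin, hne, hn, ?_⟩, hV⟩
  simp only [sInf_image_norm_sub_sq, hα, hV]

end Quantization

section PositivePart

lemma exists_integral_posPart_eq_of_quasiconcaveOn {f : ℝ → ℝ} {a b : ℝ} (hab : a ≤ b)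
    (hcont : ContinuousOn f (Icc a b)) (hf : QuasiconcaveOn ℝ (Icc a b) f) :
    ∃ p q, a ≤ p ∧ p ≤ q ∧ ∫ t in a..b, (f t)⁺ = ∫ t in p..q, f t := by
  let S : Set ℝ := {t ∈ Icc a b | 0 ≤ f t}
  have hSclosed : IsClosed S := isClosed_Icc.isClosed_le continuousOn_const hcont
  have hScompact : IsCompact S := isCompact_Icc.of_isClosed_subset hSclosed (sep_subset _ _)
  have hposPart : EqOn (fun t => (f t)⁺) (S.indicator f) (Icc a b) := by
    intro t ht
    by_cases hft : 0 ≤ f t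
    · have htS : t ∈ S := ⟨ht, hft⟩
      simp [htS, hft]
    · have htS : t ∉ S := fun h => hft h.2
      simp [htS, (not_le.1 hft).le]
  have hint : ∫ t in a..b, (f t)⁺ = ∫ t in S, f t := by
    rw [intervalIntegral.integral_of_le hab, ← integral_Icc_eq_integral_Ioc,
      setIntegral_congr_fun measurableSet_Icc hposPart,
      setIntegral_indicator hSclosed.measurableSet, inter_eq_self_of_subset_right (sep_subset _ _)]
  rcases S.eq_empty_or_nonempty with hS | hS
  · exact ⟨a, a, le_rfl, le_rfl, by simp [hint, hS]⟩
  have hSIcc : S = Icc (sInf S) (sSup S) :=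
    eq_Icc_of_connected_compact ⟨hS, (hf 0).isPreconnected⟩ hScompact
  have hle : sInf S ≤ sSup S := nonempty_Icc.1 (hSIcc ▸ hS)
  refine ⟨sInf S, sSup S, (hScompact.sInf_mem hS).1.1, hle, ?_⟩
  rw [hint, intervalIntegral.integral_of_le hle, ← integral_Icc_eq_integral_Ioc, ← hSIcc]

lemma exists_pos_of_integral_posPart_ne_zero {f : ℝ → ℝ} {a b : ℝ} (hab : a ≤ b)
    (hf : ∫ t in a..b, (f t)⁺ ≠ 0) : ∃ t ∈ Icc a b, 0 < f t := by
  contrapose! hf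
  refine intervalIntegral.integral_zero_ae (ae_of_all _ fun t ht => ?_)
  rw [uIoc_of_le hab] at ht
  exact posPart_of_nonpos (hf t (Ioc_subset_Icc_self ht))

end PositivePart

lemma integral_zero_one_le_two_mul_of_le {f q : ℝ → ℝ} (hf : Continuous f) (hq : Continuous q)
    (hle : ∀ t, f t ≤ q t) (hle' : ∀ t, f t ≤ q (1 - t)) :
    ∫ t in (0 : ℝ)..1, f t ≤ 2 * ∫ t in (0 : ℝ)..1 / 2, q t := by
  have hleft : ∫ t in (0 : ℝ)..1 / 2, f t ≤ ∫ t in (0 : ℝ)..1 / 2, q t :=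
    intervalIntegral.integral_mono (by norm_num) (hf.intervalIntegrable _ _)
      (hq.intervalIntegrable _ _) hle
  have hright : ∫ t in (1 / 2 : ℝ)..1, f t ≤ ∫ t in (0 : ℝ)..1 / 2, q t := by
    calc ∫ t in (1 / 2 : ℝ)..1, f t ≤ ∫ t in (1 / 2 : ℝ)..1, q (1 - t) :=
          intervalIntegral.integral_mono (by norm_num) (hf.intervalIntegrable _ _)
            ((hq.comp (continuous_sub_left 1)).intervalIntegrable _ _) hle'
      _ = ∫ t in (0 : ℝ)..1 / 2, q t := by
          rw [intervalIntegral.integral_comp_sub_left]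
          norm_num
  rw [← intervalIntegral.integral_add_adjacent_intervals (hf.intervalIntegrable 0 (1 / 2))
    (hf.intervalIntegrable (1 / 2) 1)]
  linarith

section Corner

variable {E : Type*} [NormedAddCommGroup E] [InnerProductSpace ℝ E]

lemma integral_norm_smul_sub_sq (u a : E) (p q : ℝ) :
    ∫ t in p..q, ‖t • u - a‖ ^ 2 =
      (q - p) * ‖((p + q) / 2) • u - a‖ ^ 2 + (q - p) ^ 3 / 12 * ‖u‖ ^ 2 := by
  have hexpand (t : ℝ) : ‖t • u - a‖ ^ 2 = ‖u‖ ^ 2 * t ^ 2 - 2 * ⟪u, a⟫_ℝ * t + ‖a‖ ^ 2 := by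
    rw [norm_sub_sq_real, norm_smul, real_inner_smul_left, mul_pow, norm_eq_abs, sq_abs]
    ring
  simp only [hexpand]
  rw [intervalIntegral.integral_add (Continuous.intervalIntegrable (by fun_prop) _ _)
      (Continuous.intervalIntegrable (by fun_prop) _ _),
    intervalIntegral.integral_sub (Continuous.intervalIntegrable (by fun_prop) _ _)
      (Continuous.intervalIntegrable (by fun_prop) _ _),
    intervalIntegral.integral_const_mul, intervalIntegral.integral_const_mul, integral_pow,
    integral_id, intervalIntegral.integral_const, smul_eq_mul]
  push_cast
  ring

lemma mul_mul_norm_sub_sq_le (l k : ℝ) (x y : E) :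
    l * k * ‖x - y‖ ^ 2 ≤ (l + k) * (l * ‖x‖ ^ 2 + k * ‖y‖ ^ 2) := by
  have hcentroid : 0 ≤ ‖l • x + k • y‖ ^ 2 := sq_nonneg _
  rw [norm_add_sq_real, norm_smul, norm_smul, real_inner_smul_left, real_inner_smul_right,
    mul_pow, mul_pow, norm_eq_abs, norm_eq_abs, sq_abs, sq_abs] at hcentroid
  rw [norm_sub_sq_real]
  linarith

lemma exists_integral_posPart_sub_norm_sq_eq (u a : E) (c : ℝ) {b : ℝ} (hb : 0 ≤ b) :
    ∃ p q, 0 ≤ p ∧ p ≤ q ∧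
      ∫ t in 0..b, (c - ‖t • u - a‖ ^ 2)⁺ = c * (q - p) - ∫ t in p..q, ‖t • u - a‖ ^ 2 := by
  have hconvex : ConvexOn ℝ (Icc 0 b) fun t : ℝ => ‖t • u - a‖ ^ 2 := by
    have hnorm : ConvexOn ℝ univ fun t : ℝ => ‖t • u - a‖ := by
      have := (convexOn_univ_norm (E := E)).comp_affineMap
        (AffineMap.lineMap (k := ℝ) (-a) (u - a))
      refine this.congr fun t _ => ?_
      simp [AffineMap.lineMap_apply, sub_eq_add_neg]
    exact (hnorm.subset (subset_univ _) (convex_Icc 0 b)).pow (fun _ _ => norm_nonneg _) 2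
  have hconcave : ConcaveOn ℝ (Icc 0 b) fun t : ℝ => c - ‖t • u - a‖ ^ 2 :=
    (concaveOn_const c (convex_Icc 0 b)).sub hconvex
  obtain ⟨p, q, hp, hpq, hint⟩ := exists_integral_posPart_eq_of_quasiconcaveOn hb
    (Continuous.continuousOn (by fun_prop)) hconcave.quasiconcaveOn
  refine ⟨p, q, hp, hpq, hint.trans ?_⟩
  rw [intervalIntegral.integral_sub intervalIntegrable_const
    (Continuous.intervalIntegrable (by fun_prop) _ _)]
  simp [mul_comm]

lemma sq_add_mul_add_sq_le_norm_smul_sub_smul_sq {u w : E} (hu : ‖u‖ = 1) (hw : ‖w‖ = 1)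
    (huw : ⟪u, w⟫_ℝ ≤ -(1 / 2)) {m n : ℝ} (hm : 0 ≤ m) (hn : 0 ≤ n) :
    m ^ 2 + m * n + n ^ 2 ≤ ‖m • u - n • w‖ ^ 2 := by
  have hmn := mul_le_mul_of_nonneg_left huw (mul_nonneg hm hn)
  rw [norm_sub_sq_real, norm_smul, norm_smul, real_inner_smul_left, real_inner_smul_right, hu, hw,
    norm_of_nonneg hm, norm_of_nonneg hn]
  linarith

lemma mul_add_pow_three_le_mul_norm_sub_sq {u w : E} (hu : ‖u‖ = 1) (hw : ‖w‖ = 1)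
    (huw : ⟪u, w⟫_ℝ ≤ -(1 / 2)) {l k m n : ℝ} (hl : 0 ≤ l) (hk : 0 ≤ k) (hlm : l / 2 ≤ m)
    (hkn : k / 2 ≤ n) (a : E) :
    13 / 192 * (l + k) ^ 3 ≤
      l * ‖m • u - a‖ ^ 2 + k * ‖n • w - a‖ ^ 2 + (l ^ 3 + k ^ 3) / 12 := by
  have hm : 0 ≤ m := by linarith
  have hn : 0 ≤ n := by linarith
  rcases (add_nonneg hl hk).eq_or_lt with hlk | hlk
  · obtain ⟨rfl, rfl⟩ : l = 0 ∧ k = 0 := ⟨by linarith, by linarith⟩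
    simp
  have hmidpoints : (l ^ 2 + l * k + k ^ 2) / 4 ≤ ‖m • u - a - (n • w - a)‖ ^ 2 := by
    rw [sub_sub_sub_cancel_right]
    calc (l ^ 2 + l * k + k ^ 2) / 4 = (l / 2) ^ 2 + l / 2 * (k / 2) + (k / 2) ^ 2 := by ring
      _ ≤ m ^ 2 + m * n + n ^ 2 := by gcongr
      _ ≤ ‖m • u - n • w‖ ^ 2 := sq_add_mul_add_sq_le_norm_smul_sub_smul_sq hu hw huw hm hn
  have hamgm : (l * k) ^ 2 ≤ (l + k) ^ 4 / 16 := by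
    calc (l * k) ^ 2 ≤ ((l + k) ^ 2 / 4) ^ 2 := by gcongr; linarith [sq_nonneg (l - k)]
      _ = (l + k) ^ 4 / 16 := by ring
  refine le_of_mul_le_mul_left ?_ hlk
  calc (l + k) * (13 / 192 * (l + k) ^ 3) = (l + k) ^ 4 / 12 - (l + k) ^ 4 / 16 / 4 := by ring
    _ ≤ (l + k) ^ 4 / 12 - (l * k) ^ 2 / 4 := by gcongr
    _ = l * k * ((l ^ 2 + l * k + k ^ 2) / 4) + (l + k) * ((l ^ 3 + k ^ 3) / 12) := by ring
    _ ≤ l * k * ‖m • u - a - (n • w - a)‖ ^ 2 + (l + k) * ((l ^ 3 + k ^ 3) / 12) := by gcongr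
    _ ≤ (l + k) * (l * ‖m • u - a‖ ^ 2 + k * ‖n • w - a‖ ^ 2)
          + (l + k) * ((l ^ 3 + k ^ 3) / 12) :=
        add_le_add_left (mul_mul_norm_sub_sq_le l k _ _) _
    _ = (l + k) * (l * ‖m • u - a‖ ^ 2 + k * ‖n • w - a‖ ^ 2 + (l ^ 3 + k ^ 3) / 12) := by ring

lemma mul_add_pow_three_le_integral_norm_sub_sq {u w : E} (hu : ‖u‖ = 1) (hw : ‖w‖ = 1)
    (huw : ⟪u, w⟫_ℝ ≤ -(1 / 2)) {p p' q q' : ℝ} (hp : 0 ≤ p) (hpp' : p ≤ p') (hq : 0 ≤ q)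
    (hqq' : q ≤ q') (a : E) :
    13 / 192 * (p' - p + (q' - q)) ^ 3 ≤
      (∫ t in p..p', ‖t • u - a‖ ^ 2) + ∫ t in q..q', ‖t • w - a‖ ^ 2 := by
  rw [integral_norm_smul_sub_sq, integral_norm_smul_sub_sq, hu, hw]
  linarith [mul_add_pow_three_le_mul_norm_sub_sq hu hw huw (sub_nonneg.2 hpp')
    (sub_nonneg.2 hqq') (m := (p + p') / 2) (n := (q + q') / 2) (by linarith) (by linarith) a]

theorem integral_posPart_add_integral_posPart_le {u w : E} (hu : ‖u‖ = 1) (hw : ‖w‖ = 1)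
    (huw : ⟪u, w⟫_ℝ ≤ -(1 / 2)) {r b c : ℝ} (hr : 0 ≤ r) (hb : 0 ≤ b) (hc : 0 ≤ c) (a : E) :
    (∫ t in 0..b, (13 / 64 * r ^ 2 - ‖t • u - a‖ ^ 2)⁺) +
      ∫ t in 0..c, (13 / 64 * r ^ 2 - ‖t • w - a‖ ^ 2)⁺ ≤ 13 / 96 * r ^ 3 := by
  obtain ⟨p, p', hp, hpp', hint⟩ :=
    exists_integral_posPart_sub_norm_sq_eq u a (13 / 64 * r ^ 2) hb
  obtain ⟨q, q', hq, hqq', hint'⟩ :=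
    exists_integral_posPart_sub_norm_sq_eq w a (13 / 64 * r ^ 2) hc
  rw [hint, hint']
  have hinertia := mul_add_pow_three_le_integral_norm_sub_sq hu hw huw hp hpp' hq hqq' a
  set s := p' - p + (q' - q)
  have hcubic : 0 ≤ (s - r) ^ 2 * (s + 2 * r) :=
    mul_nonneg (sq_nonneg _) (by linarith)
  linear_combination hinertia + 13 / 192 * hcubic

end Corner

section CyclicAdjacency

variable {G : Type*} [AddCommGroup G] {g : G}

lemma exists_forall_eq_or_eq_add_of_adjacent (h2 : g + g ≠ 0) (h3 : g + g + g ≠ 0)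
    {S : Set G} (hS : ∀ i ∈ S, ∀ j ∈ S, j = i ∨ j = i + g ∨ i = j + g) :
    ∃ i, ∀ j ∈ S, j = i ∨ j = i + g := by
  by_cases hpair : ∃ i ∈ S, i + g ∈ S
  · obtain ⟨i, hi, hig⟩ := hpair
    refine ⟨i, fun j hj => ?_⟩
    rcases hS i hi j hj with h | h | rfl
    · exact Or.inl h
    · exact Or.inr h
    · rcases hS j hj _ hig with h | h | h
      · exact absurd (by simpa [add_assoc] using h) h2
      · exact Or.inl (by simpa using h.symm)
      · exact absurd (by simpa [add_assoc] using h) h3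
  · push Not at hpair
    rcases S.eq_empty_or_nonempty with rfl | ⟨i, hi⟩
    · exact ⟨0, by simp⟩
    refine ⟨i, fun j hj => ?_⟩
    rcases hS i hi j hj with h | h | rfl
    · exact Or.inl h
    · exact Or.inr h
    · exact absurd hi (hpair j hj)

lemma sum_le_of_adjacent_support [Fintype G] (h2 : g + g ≠ 0) (h3 : g + g + g ≠ 0)
    {f : G → ℝ} {M : ℝ} (hM : ∀ i, f i + f (i + g) ≤ M)
    (hf : ∀ i j, f i ≠ 0 → f j ≠ 0 → j = i ∨ j = i + g ∨ i = j + g) :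
    ∑ i, f i ≤ M := by
  obtain ⟨i, hi⟩ := exists_forall_eq_or_eq_add_of_adjacent h2 h3
    (S := {i | f i ≠ 0}) fun i hi j hj => hf i j hi hj
  have hg : g ≠ 0 := by rintro rfl; simp at h2
  have hsum : ∑ j, f j = f i + f (i + g) :=
    Fintype.sum_eq_add i (i + g) (by simpa using hg) fun j hj => by
      by_contra hfj
      exact (hi j hfj).elim hj.1 hj.2
  exact hsum.trans_le (hM i)

end CyclicAdjacency

section ArcLength

lemma isometry_add_smul {E : Type*} [NormedAddCommGroup E] [NormedSpace ℝ E] (v : E) {u : E}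
    (hu : ‖u‖ = 1) : Isometry fun t : ℝ => v + t • u :=
  Isometry.of_dist_eq fun s t => by
    rw [dist_add_left, dist_eq_norm, ← sub_smul, norm_smul, hu, mul_one, dist_eq_norm]

variable {X : Type*} [MetricSpace X] [MeasurableSpace X] [BorelSpace X]

lemma hausdorffMeasure_restrict_image_of_isometry {γ : ℝ → X} (hγ : Isometry γ) (s : Set ℝ) :
    (μH[1] : Measure X).restrict (γ '' s) = (volume.restrict s).map γ := by
  have hemb : MeasurableEmbedding γ := hγ.isClosedEmbedding.measurableEmbedding
  have hmap : volume.map γ = (μH[1] : Measure X).restrict (range γ) := by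
    rw [← hausdorffMeasure_real, hγ.map_hausdorffMeasure (Or.inl zero_le_one)]
  have hrestrict := hemb.restrict_map volume (γ '' s)
  rwa [preimage_image_eq s hγ.injective, hmap,
    Measure.restrict_restrict_of_subset (image_subset_range γ s)] at hrestrict

lemma hausdorffMeasure_restrict_iUnion_image_of_isometry {ι : Type*} [Fintype ι]
    {γ : ι → ℝ → X} (hγ : ∀ i, Isometry (γ i)) {s : Set ℝ} (hs : MeasurableSet s)
    (hdisj : Pairwise fun i j => AEDisjoint (μH[1] : Measure X) (γ i '' s) (γ j '' s)) :
    (μH[1] : Measure X).restrict (⋃ i, γ i '' s) = ∑ i, (volume.restrict s).map (γ i) := by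
  have hmeas (i : ι) : MeasurableSet (γ i '' s) :=
    (hγ i).isClosedEmbedding.measurableEmbedding.measurableSet_image.2 hs
  rw [Measure.restrict_iUnion_ae hdisj fun i => (hmeas i).nullMeasurableSet, Measure.sum_fintype]
  simp only [hausdorffMeasure_restrict_image_of_isometry (hγ _)]

end ArcLength

section Hexagon

/-- The vertices `O, A₁, …, A₅` of the hexagon; the cyclic addition of `Fin 6` makes
`hexVertex (i + 1)` the neighbour following `hexVertex i`. -/
def hexVertex : Fin 6 → E2 :=
  ![pt 0 0, pt 1 0, pt (3 / 2) (√3 / 2), pt 1 √3, pt 0 √3, pt (-(1 / 2)) (√3 / 2)]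

/-- The unit vector from the `i`-th vertex of the hexagon to the next one. -/
def hexSide (i : Fin 6) : E2 := hexVertex (i + 1) - hexVertex i

/-- The arc-length parametrization of the `i`-th edge of the hexagon by `[0, 1]`, extended to the
whole line through that edge. -/
def hexEdge (i : Fin 6) (t : ℝ) : E2 := hexVertex i + t • hexSide i

lemma hexVertex_succ (i : Fin 6) : hexVertex (i + 1) = hexVertex i + hexSide i := by
  rw [hexSide, add_sub_cancel]

lemma pt_sub_pt (a b c d : ℝ) : pt a b - pt c d = pt (a - c) (b - d) := by
  ext k; fin_cases k <;> simp [pt]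

lemma inner_pt_pt (a b c d : ℝ) : ⟪pt a b, pt c d⟫_ℝ = a * c + b * d := by
  simp [pt, PiLp.inner_apply, Fin.sum_univ_two, mul_comm]

lemma norm_pt_sq (a b : ℝ) : ‖pt a b‖ ^ 2 = a ^ 2 + b ^ 2 := by
  rw [← real_inner_self_eq_norm_sq, inner_pt_pt, sq, sq]

lemma hexSide_eq (i : Fin 6) : hexSide i = ![pt 1 0, pt (1 / 2) (√3 / 2), pt (-(1 / 2)) (√3 / 2),
    pt (-1) 0, pt (-(1 / 2)) (-(√3 / 2)), pt (1 / 2) (-(√3 / 2))] i := by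
  fin_cases i <;> simp [hexSide, hexVertex, pt_sub_pt] <;> norm_num <;> ring_nf

lemma norm_hexSide (i : Fin 6) : ‖hexSide i‖ = 1 := by
  rw [← sq_eq_sq₀ (norm_nonneg _) zero_le_one, hexSide_eq]
  fin_cases i <;> norm_num [norm_pt_sq, div_pow]

lemma inner_hexSide_hexSide_succ (i : Fin 6) : ⟪hexSide i, hexSide (i + 1)⟫_ℝ = 1 / 2 := by
  rw [hexSide_eq, hexSide_eq]
  have h3 : √3 * √3 = 3 := mul_self_sqrt (by norm_num)
  fin_cases i <;> simp [inner_pt_pt] <;> linarith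

lemma hexSide_succ_succ (i : Fin 6) : hexSide (i + 1 + 1) = hexSide (i + 1) - hexSide i := by
  simp only [hexSide_eq]
  fin_cases i <;> simp [pt_sub_pt] <;> norm_num

lemma norm_smul_hexSide_add_smul_hexSide_sq (i : Fin 6) (a b : ℝ) :
    ‖a • hexSide i + b • hexSide (i + 1)‖ ^ 2 = a ^ 2 + a * b + b ^ 2 := by
  rw [norm_add_sq_real, norm_smul, norm_smul, norm_hexSide, norm_hexSide, real_inner_smul_left,
    real_inner_smul_right, inner_hexSide_hexSide_succ, mul_one, mul_one, norm_eq_abs, norm_eq_abs,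
    sq_abs, sq_abs]
  ring

lemma hexEdge_succ_sub_hexEdge (i : Fin 6) (t r : ℝ) :
    hexEdge (i + 1) r - hexEdge i t = (1 - t) • hexSide i + r • hexSide (i + 1) := by
  simp only [hexEdge, hexVertex_succ]
  module

lemma hexEdge_succ_succ_sub_hexEdge (i : Fin 6) (t r : ℝ) :
    hexEdge (i + 1 + 1) r - hexEdge i t =
      (1 - t - r) • hexSide i + (1 + r) • hexSide (i + 1) := by
  simp only [hexEdge, hexVertex_succ, hexSide_succ_succ]
  module

lemma hexEdge_succ_succ_succ_sub_hexEdge (i : Fin 6) (t r : ℝ) :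
    hexEdge (i + 1 + 1 + 1) r - hexEdge i t = (-t - r) • hexSide i + (2 : ℝ) • hexSide (i + 1) := by
  simp only [hexEdge, hexVertex_succ, hexSide_succ_succ]
  module

lemma one_le_norm_hexEdge_sub_hexEdge {i j : Fin 6} (hij : ¬(j = i ∨ j = i + 1 ∨ i = j + 1))
    {t r : ℝ} (ht : t ∈ Icc 0 1) (hr : r ∈ Icc 0 1) : 1 ≤ ‖hexEdge j r - hexEdge i t‖ := by
  have hcases : j = i + 1 + 1 ∨ i = j + 1 + 1 ∨ j = i + 1 + 1 + 1 := by revert i j; decide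
  obtain ⟨ht0, ht1⟩ := ht
  obtain ⟨hr0, hr1⟩ := hr
  refine (one_le_sq_iff₀ (norm_nonneg _)).1 ?_
  rcases hcases with rfl | rfl | rfl
  · rw [hexEdge_succ_succ_sub_hexEdge, norm_smul_hexSide_add_smul_hexSide_sq]
    nlinarith
  · rw [norm_sub_rev, hexEdge_succ_succ_sub_hexEdge, norm_smul_hexSide_add_smul_hexSide_sq]
    nlinarith
  · rw [hexEdge_succ_succ_succ_sub_hexEdge, norm_smul_hexSide_add_smul_hexSide_sq]
    nlinarith

lemma hexEdge_image_inter_succ_subset (i : Fin 6) :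
    hexEdge i '' Icc 0 1 ∩ hexEdge (i + 1) '' Icc 0 1 ⊆ {hexEdge i 1} := by
  rintro _ ⟨⟨t, ⟨-, ht⟩, rfl⟩, r, ⟨hr, -⟩, hrt⟩
  have hnorm := norm_smul_hexSide_add_smul_hexSide_sq i (1 - t) r
  rw [← hexEdge_succ_sub_hexEdge, hrt, sub_self, norm_zero] at hnorm
  have ht' : t = 1 := by nlinarith [mul_nonneg (sub_nonneg.2 ht) hr, sq_nonneg r]
  rw [ht', mem_singleton_iff]

lemma aedisjoint_hexEdge_image {i j : Fin 6} (hij : i ≠ j) :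
    AEDisjoint (μH[1] : Measure E2) (hexEdge i '' Icc 0 1) (hexEdge j '' Icc 0 1) := by
  have : NullSingletonClass (μH[1] : Measure E2) :=
    Measure.nullSingletonClass_hausdorff E2 zero_lt_one
  have hsucc (k : Fin 6) :
      AEDisjoint (μH[1] : Measure E2) (hexEdge k '' Icc 0 1) (hexEdge (k + 1) '' Icc 0 1) :=
    measure_mono_null (hexEdge_image_inter_succ_subset k) (measure_singleton _)
  by_cases hadj : j = i ∨ j = i + 1 ∨ i = j + 1
  · rcases hadj with rfl | rfl | rfl
    · exact absurd rfl hij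
    · exact hsucc i
    · exact (hsucc j).symm
  · refine (disjoint_left.2 ?_).aedisjoint
    rintro _ ⟨t, ht, rfl⟩ ⟨r, hr, hrt⟩
    have hdist := one_le_norm_hexEdge_sub_hexEdge hadj ht hr
    rw [hrt, sub_self, norm_zero] at hdist
    linarith

lemma hexL_eq_iUnion_hexEdge_image : hexL = ⋃ i, hexEdge i '' Icc 0 1 := by
  have hsegment (i : Fin 6) :
      hexEdge i '' Icc 0 1 = segment ℝ (hexVertex i) (hexVertex (i + 1)) :=
    (segment_eq_image' ℝ _ _).symm
  ext x
  simp only [hexL, hsegment, mem_iUnion, mem_union, Fin.exists_fin_succ]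
  simp [hexVertex, or_assoc]

lemma isometry_hexEdge (i : Fin 6) : Isometry (hexEdge i) :=
  isometry_add_smul _ (norm_hexSide i)

lemma hexP_eq_sum_map :
    hexP = (6 : ℝ≥0∞)⁻¹ • ∑ i, (volume.restrict (Icc (0 : ℝ) 1)).map (hexEdge i) := by
  rw [hexP, hexL_eq_iUnion_hexEdge_image, hausdorffMeasure_restrict_iUnion_image_of_isometry
    isometry_hexEdge measurableSet_Icc fun _ _ => aedisjoint_hexEdge_image]

instance : IsProbabilityMeasure hexP := by
  have hmap (i : Fin 6) : (volume.restrict (Icc (0 : ℝ) 1)).map (hexEdge i) univ = 1 := by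
    rw [Measure.map_apply (isometry_hexEdge i).continuous.measurable .univ]
    simp
  refine ⟨?_⟩
  simp [hexP_eq_sum_map, hmap, ENNReal.inv_mul_cancel]

lemma integrable_map_hexEdge {f : E2 → ℝ} (hf : Continuous f) (i : Fin 6) :
    Integrable f ((volume.restrict (Icc (0 : ℝ) 1)).map (hexEdge i)) := by
  have hedge := (isometry_hexEdge i).continuous
  rw [integrable_map_measure hf.aestronglyMeasurable hedge.aemeasurable]
  exact (hf.comp hedge).integrableOn_Icc

lemma integrable_hexP {f : E2 → ℝ} (hf : Continuous f) : Integrable f hexP := by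
  rw [hexP_eq_sum_map]
  refine Integrable.smul_measure ?_ (by simp)
  exact integrable_finsetSum_measure.2 fun i _ => integrable_map_hexEdge hf i

lemma integral_hexP {f : E2 → ℝ} (hf : Continuous f) :
    ∫ x, f x ∂hexP = 1 / 6 * ∑ i, ∫ t in (0 : ℝ)..1, f (hexEdge i t) := by
  rw [hexP_eq_sum_map, integral_smul_measure,
    integral_finsetSum_measure fun i _ => integrable_map_hexEdge hf i, smul_eq_mul]
  congr 1
  · simp
  refine Finset.sum_congr rfl fun i _ => ?_
  rw [integral_map (isometry_hexEdge i).continuous.aemeasurable hf.aestronglyMeasurable,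
    intervalIntegral.integral_of_le zero_le_one, integral_Icc_eq_integral_Ioc]

lemma integral_posPart_hexEdge_add_succ_le (i : Fin 6) (a : E2) :
    (∫ t in (0 : ℝ)..1, (13 / 64 - dist (hexEdge i t) a ^ 2)⁺) +
      ∫ t in (0 : ℝ)..1, (13 / 64 - dist (hexEdge (i + 1) t) a ^ 2)⁺ ≤ 13 / 96 := by
  have hangle : ⟪-hexSide i, hexSide (i + 1)⟫_ℝ ≤ -(1 / 2) := by
    rw [inner_neg_left, inner_hexSide_hexSide_succ]
  have hcorner := integral_posPart_add_integral_posPart_le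
    ((norm_neg _).trans (norm_hexSide i)) (norm_hexSide (i + 1)) hangle
    zero_le_one zero_le_one zero_le_one (a - hexVertex (i + 1))
  have hrev (t : ℝ) : hexEdge i (1 - t) - a = t • -hexSide i - (a - hexVertex (i + 1)) := by
    rw [hexEdge, hexVertex_succ]
    module
  have hfwd (t : ℝ) : hexEdge (i + 1) t - a = t • hexSide (i + 1) - (a - hexVertex (i + 1)) := by
    rw [hexEdge]
    module
  have hsubst := intervalIntegral.integral_comp_sub_left (a := 0) (b := 1)
    (fun t => (13 / 64 - dist (hexEdge i t) a ^ 2)⁺) 1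
  rw [sub_zero, sub_self] at hsubst
  rw [← hsubst]
  simpa only [dist_eq_norm, hrev, hfwd, one_pow, mul_one] using hcorner

lemma adjacent_of_integral_posPart_hexEdge_ne_zero {i j : Fin 6} {a : E2}
    (hi : ∫ t in (0 : ℝ)..1, (13 / 64 - dist (hexEdge i t) a ^ 2)⁺ ≠ 0)
    (hj : ∫ t in (0 : ℝ)..1, (13 / 64 - dist (hexEdge j t) a ^ 2)⁺ ≠ 0) :
    j = i ∨ j = i + 1 ∨ i = j + 1 := by
  by_contra hij
  obtain ⟨t, ht, hta⟩ := exists_pos_of_integral_posPart_ne_zero zero_le_one hi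
  obtain ⟨r, hr, hra⟩ := exists_pos_of_integral_posPart_ne_zero zero_le_one hj
  have hta' : dist (hexEdge i t) a < 1 / 2 := lt_of_pow_lt_pow_left₀ 2 (by norm_num) (by linarith)
  have hra' : dist (hexEdge j r) a < 1 / 2 := lt_of_pow_lt_pow_left₀ 2 (by norm_num) (by linarith)
  have hdist := one_le_norm_hexEdge_sub_hexEdge hij ht hr
  rw [← dist_eq_norm] at hdist
  linarith [dist_triangle_right (hexEdge j r) (hexEdge i t) a]

lemma integral_posPart_hexP_le (a : E2) : ∫ x, (13 / 64 - dist x a ^ 2)⁺ ∂hexP ≤ 13 / 576 := by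
  have hsum : ∑ i, ∫ t in (0 : ℝ)..1, (13 / 64 - dist (hexEdge i t) a ^ 2)⁺ ≤ 13 / 96 :=
    sum_le_of_adjacent_support (g := 1) (by decide) (by decide)
      (integral_posPart_hexEdge_add_succ_le · a)
      fun _ _ => adjacent_of_integral_posPart_hexEdge_ne_zero
  have hcont : Continuous fun x : E2 => (13 / 64 - dist x a ^ 2)⁺ :=
    continuous_posPart.comp (by fun_prop)
  rw [integral_hexP hcont]
  linarith

theorem le_integral_infDist_sq_hexP {β : Set E2} (hfin : β.Finite) (hne : β.Nonempty)
    (hcard : β.ncard ≤ 6) : 13 / 192 ≤ ∫ x, infDist x β ^ 2 ∂hexP := by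
  have hbound := sub_mul_le_integral_infDist_sq integral_posPart_hexP_le hfin hne hcard
    (integrable_hexP ((continuous_infDist_pt β).pow 2))
  norm_num at hbound ⊢
  exact hbound

/-- The six means of the theorem: `hexVertex i` moved by `1 / 8` towards the centre of the
hexagon, the direction to the centre being `hexSide (i + 1)`. -/
def hexMean (i : Fin 6) : E2 := hexVertex i + (1 / 8 : ℝ) • hexSide (i + 1)

lemma hexMean_eq : hexMean = ![pt (1 / 16) (√3 / 16), pt (15 / 16) (√3 / 16),
    pt (11 / 8) (√3 / 2), pt (15 / 16) (15 * √3 / 16), pt (1 / 16) (15 * √3 / 16),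
    pt (-(3 / 8)) (√3 / 2)] := by
  funext i
  rw [hexMean, hexSide_eq]
  fin_cases i <;> ext k <;> fin_cases k <;> simp [hexVertex, pt] <;> ring

lemma range_hexMean : range hexMean =
    {pt (15 / 16) (√3 / 16), pt (11 / 8) (√3 / 2), pt (15 / 16) (15 * √3 / 16),
      pt (1 / 16) (15 * √3 / 16), pt (-(3 / 8)) (√3 / 2), pt (1 / 16) (√3 / 16)} := by
  ext x
  simp only [hexMean_eq, Matrix.range_cons, Matrix.range_empty, union_empty, singleton_union,
    mem_insert_iff, mem_singleton_iff]
  tauto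

lemma norm_hexEdge_sub_hexMean_sq (i : Fin 6) (t : ℝ) :
    ‖hexEdge i t - hexMean i‖ ^ 2 = t ^ 2 - t / 8 + 1 / 64 := by
  have hdiff : hexEdge i t - hexMean i = t • hexSide i + (-(1 / 8) : ℝ) • hexSide (i + 1) := by
    rw [hexEdge, hexMean]
    module
  rw [hdiff, norm_smul_hexSide_add_smul_hexSide_sq]
  ring

lemma norm_hexEdge_sub_hexMean_succ_sq (i : Fin 6) (t : ℝ) :
    ‖hexEdge i t - hexMean (i + 1)‖ ^ 2 = (1 - t) ^ 2 - (1 - t) / 8 + 1 / 64 := by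
  have hdiff : hexEdge i t - hexMean (i + 1) =
      (t - 7 / 8) • hexSide i + (-(1 / 8) : ℝ) • hexSide (i + 1) := by
    rw [hexEdge, hexMean, hexVertex_succ, hexSide_succ_succ]
    module
  rw [hdiff, norm_smul_hexSide_add_smul_hexSide_sq]
  ring

lemma integral_infDist_hexEdge_range_hexMean_sq_le (i : Fin 6) :
    ∫ t in (0 : ℝ)..1, infDist (hexEdge i t) (range hexMean) ^ 2 ≤ 13 / 192 := by
  have hle (t : ℝ) (j : Fin 6) :
      infDist (hexEdge i t) (range hexMean) ^ 2 ≤ ‖hexEdge i t - hexMean j‖ ^ 2 := by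
    rw [← dist_eq_norm]
    exact pow_le_pow_left₀ infDist_nonneg (infDist_le_dist_of_mem (mem_range_self j)) 2
  have hcont : Continuous fun t => infDist (hexEdge i t) (range hexMean) ^ 2 :=
    ((continuous_infDist_pt _).comp (isometry_hexEdge i).continuous).pow 2
  calc ∫ t in (0 : ℝ)..1, infDist (hexEdge i t) (range hexMean) ^ 2
      ≤ 2 * ∫ t in (0 : ℝ)..1 / 2, (t ^ 2 - t / 8 + 1 / 64) :=
        integral_zero_one_le_two_mul_of_le hcont (by fun_prop)
          (fun t => norm_hexEdge_sub_hexMean_sq i t ▸ hle t i)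
          fun t => norm_hexEdge_sub_hexMean_succ_sq i t ▸ hle t (i + 1)
    _ = 13 / 192 := by
        rw [intervalIntegral.integral_add (Continuous.intervalIntegrable (by fun_prop) _ _)
            (Continuous.intervalIntegrable (by fun_prop) _ _),
          intervalIntegral.integral_sub (Continuous.intervalIntegrable (by fun_prop) _ _)
            (Continuous.intervalIntegrable (by fun_prop) _ _),
          intervalIntegral.integral_div, integral_pow, integral_id,
          intervalIntegral.integral_const]
        norm_num

theorem integral_infDist_range_hexMean_sq_le :
    ∫ x, infDist x (range hexMean) ^ 2 ∂hexP ≤ 13 / 192 := by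
  have hcont : Continuous fun x => infDist x (range hexMean) ^ 2 :=
    (continuous_infDist_pt _).pow 2
  rw [integral_hexP hcont]
  have hsum := Finset.sum_le_card_nsmul Finset.univ _ _
    fun i _ => integral_infDist_hexEdge_range_hexMean_sq_le i
  rw [Finset.card_univ, Fintype.card_fin, nsmul_eq_mul] at hsum
  linarith

end Hexagon

/-- The set `{(15/16, √3/16), (11/8, √3/2), (15/16, 15√3/16), (1/16, 15√3/16),
(-3/8, √3/2), (1/16, √3/16)}` forms an optimal set of six-means for the uniform
distribution on the hexagon boundary, and `V₆ = 13/192`. -/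
theorem stmt_6 :
    IsOptimalSet hexP 6
      {pt (15/16) (Real.sqrt 3 / 16), pt (11/8) (Real.sqrt 3 / 2),
        pt (15/16) (15 * Real.sqrt 3 / 16), pt (1/16) (15 * Real.sqrt 3 / 16),
        pt (-(3/8)) (Real.sqrt 3 / 2), pt (1/16) (Real.sqrt 3 / 16)} ∧
    quantErr hexP 6 = 13 / 192 := by
  rw [← range_hexMean]
  have hcard : (range hexMean).ncard ≤ 6 := by
    simpa only [Nat.card_coe_set_eq, Nat.card_fin] using Finite.card_range_le hexMean
  exact isOptimalSet_and_quantErr_eq (finite_range _) (range_nonempty _) hcard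
    integral_infDist_range_hexMean_sq_le fun _ => le_integral_infDist_sq_hexP
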